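/- arXiv:1810.03566 — 4 statements merged into one kernel-verified Lean document; each statement's English description precedes it below -/
import Mathlib

section
/- Let M be a separable metric space with metric d and a Borel measure μ such that every ball has finite measure, and let 𝒜 be a doubling family of measurable subsets of M with constant C. Then the maximal operator M_𝒜 is of weak type (1,1): there is a constant C' such that for every f ∈ L¹(μ) and every λ > 0, μ({x : M_𝒜 f(x) > λ}) ≤ C' ‖f‖_{L¹}/λ. -/
/-!
The superlevel set `{M_𝒜 f > λ}` is the union of the `Q ∈ 𝒜` with `λ μ(Q) < ∫_Q |f|`. Their
measures are bounded by `‖f‖₁ / λ`, so the Vitali selection argument, run with the measure in the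
role of the radius, extracts disjoint sets `Qᵢ` among them whose enlargements `Q̃ᵢ` still cover the
superlevel set. Each `Qᵢ` carries positive mass of the integrable function `|f|`, so there are only
countably many, and `μ(⋃ Q̃ᵢ) ≤ C ∑ μ(Qᵢ) ≤ (C / λ) ∑ ∫_{Qᵢ} |f| ≤ C ‖f‖₁ / λ`.
-/

open MeasureTheory Metric Set
open scoped ENNReal

noncomputable section

/-- `𝒜` is a doubling family with constant `C`:  it consists of measurable sets, for each
`Q ∈ 𝒜` the union `Q̃` of all `R ∈ 𝒜` meeting `Q` with `μ R ≤ 2 μ Q` is contained in some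
`S ∈ 𝒜` with `μ S ≤ C μ Q`, and either `μ M ≤ C μ Q` with `M ∈ 𝒜`, or some `R ∈ 𝒜`
contains `Q` with `2 μ Q ≤ μ R ≤ C μ Q`. -/
def DoublingFamily {M : Type*} [MeasurableSpace M] (μ : Measure M)
    (A : Set (Set M)) (C : ℝ) : Prop :=
  (∀ Q ∈ A, MeasurableSet Q) ∧
  ∀ Q ∈ A,
    (∃ S ∈ A, μ S ≤ ENNReal.ofReal C * μ Q ∧
      (⋃ R ∈ {R | R ∈ A ∧ (R ∩ Q).Nonempty ∧ μ R ≤ 2 * μ Q}, R) ⊆ S) ∧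
    ((μ Set.univ ≤ ENNReal.ofReal C * μ Q ∧ Set.univ ∈ A) ∨
      (∃ R ∈ A, Q ⊆ R ∧ 2 * μ Q ≤ μ R ∧ μ R ≤ ENNReal.ofReal C * μ Q))

/-- The maximal function associated with the family `𝒜`. -/
def maximalFn {M : Type*} [MeasurableSpace M] (μ : Measure M) (A : Set (Set M))
    (f : M → ℝ) (x : M) : ℝ≥0∞ :=
  ⨆ Q ∈ A, ⨆ (_ : x ∈ Q), (∫⁻ y in Q, ENNReal.ofReal |f y| ∂μ) / μ Q

section WeakType

open scoped NNReal

variable {M : Type*} [MeasurableSpace M] {μ : Measure M} {A : Set (Set M)} {τ : ℝ≥0}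

/-- The enlargement `Q̃` of `Q` in the family `A`, with an arbitrary ratio `τ` in place of `2`: the
union of the members of `A` that meet `Q` and have measure at most `τ` times that of `Q`. -/
def enlargement (μ : Measure M) (A : Set (Set M)) (τ : ℝ≥0) (Q : Set M) : Set M :=
  ⋃ R ∈ {R | R ∈ A ∧ (R ∩ Q).Nonempty ∧ μ R ≤ τ * μ Q}, R

lemma enlargement_mono {t : Set (Set M)} (htA : t ⊆ A) (Q : Set M) :
    enlargement μ t τ Q ⊆ enlargement μ A τ Q :=
  biUnion_subset_biUnion_left fun _ hR => ⟨htA hR.1, hR.2⟩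

lemma DoublingFamily.measure_enlargement_two_le {C : ℝ} (hA : DoublingFamily μ A C) {Q : Set M}
    (hQ : Q ∈ A) : μ (enlargement μ A 2 Q) ≤ ENNReal.ofReal C * μ Q := by
  obtain ⟨⟨S, -, hSQ, hsub⟩, -⟩ := hA.2 Q hQ
  exact (measure_mono hsub).trans hSQ

lemma exists_pairwiseDisjoint_sUnion_subset_biUnion_enlargement (hτ : 1 < τ)
    (hne : ∀ Q ∈ A, Q.Nonempty) {B : ℝ≥0∞} (hB : B ≠ ⊤) (hAB : ∀ Q ∈ A, μ Q ≤ B) :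
    ∃ u ⊆ A, u.PairwiseDisjoint id ∧ ⋃₀ A ⊆ ⋃ Q ∈ u, enlargement μ A τ Q := by
  have hfin : ∀ Q ∈ A, μ Q ≠ ⊤ := fun Q hQ => ne_top_of_le_ne_top hB (hAB Q hQ)
  obtain ⟨u, huA, hdisj, hcov⟩ := Vitali.exists_disjoint_subfamily_covering_enlargement
    id A (fun Q => (μ Q).toReal) τ hτ (fun _ _ => ENNReal.toReal_nonneg) B.toReal
    (fun Q hQ => ENNReal.toReal_mono hB (hAB Q hQ)) hne
  refine ⟨u, huA, hdisj, sUnion_subset fun R hR => ?_⟩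
  obtain ⟨Q, hQu, hmeet, hle⟩ := hcov R hR
  have hRQ : μ R ≤ τ * μ Q := by
    rw [← ENNReal.toReal_le_toReal (hfin R hR)
      (ENNReal.mul_ne_top ENNReal.coe_ne_top (hfin Q (huA hQu)))]
    simpa using hle
  exact fun x hx => mem_biUnion hQu (mem_biUnion ⟨hR, hmeet, hRQ⟩ hx)

lemma tsum_setLIntegral_le_lintegral {u : Set (Set M)} (hmeas : ∀ Q ∈ u, MeasurableSet Q)
    (hdisj : u.PairwiseDisjoint id) (g : M → ℝ≥0∞) :
    ∑' Q : u, ∫⁻ y in Q, g y ∂μ ≤ ∫⁻ y, g y ∂μ := by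
  calc ∑' Q : u, ∫⁻ y in Q, g y ∂μ = ∑' Q : u, μ.withDensity g Q :=
        tsum_congr fun Q => (withDensity_apply g (hmeas Q Q.2)).symm
    _ ≤ μ.withDensity g (⋃ Q : u, Q) :=
        tsum_meas_le_meas_iUnion_of_disjoint _ (fun Q => hmeas Q Q.2)
          ((pairwise_subtype_iff_pairwise_set _ _).2 hdisj)
    _ ≤ μ.withDensity g univ := measure_mono (subset_univ _)
    _ = ∫⁻ y, g y ∂μ := by rw [withDensity_apply g .univ, Measure.restrict_univ]

lemma countable_of_pairwiseDisjoint_of_setLIntegral_ne_zero {u : Set (Set M)}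
    (hmeas : ∀ Q ∈ u, MeasurableSet Q) (hdisj : u.PairwiseDisjoint id) {g : M → ℝ≥0∞}
    (hg : ∫⁻ y, g y ∂μ ≠ ⊤) (hpos : ∀ Q ∈ u, ∫⁻ y in Q, g y ∂μ ≠ 0) : u.Countable := by
  have hsum : ∑' Q : u, ∫⁻ y in Q, g y ∂μ ≠ ⊤ :=
    ne_top_of_le_ne_top hg (tsum_setLIntegral_le_lintegral hmeas hdisj g)
  have hsupp : (Function.support fun Q : u => ∫⁻ y in Q, g y ∂μ) = univ :=
    eq_univ_of_forall fun Q => hpos Q Q.2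
  have hcount := Summable.countable_support_ennreal hsum
  rwa [hsupp, countable_univ_iff, countable_coe_iff] at hcount

lemma mul_measure_sUnion_le_mul_lintegral (hτ : 1 < τ) (hmeas : ∀ Q ∈ A, MeasurableSet Q)
    {c : ℝ≥0∞} (hc : ∀ Q ∈ A, μ (enlargement μ A τ Q) ≤ c * μ Q)
    {g : M → ℝ≥0∞} (hg : ∫⁻ y, g y ∂μ ≠ ⊤)
    {L : ℝ≥0∞} (hL : ∀ Q ∈ A, L * μ Q < ∫⁻ y in Q, g y ∂μ) :
    L * μ (⋃₀ A) ≤ c * ∫⁻ y, g y ∂μ := by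
  rcases eq_or_ne L 0 with rfl | hL0
  · simp
  have hne : ∀ Q ∈ A, Q.Nonempty := fun Q hQ =>
    nonempty_iff_ne_empty.2 fun hQe => by simpa [hQe] using hL Q hQ
  have hbdd : ∀ Q ∈ A, μ Q ≤ (∫⁻ y, g y ∂μ) / L := fun Q hQ => by
    rw [ENNReal.le_div_iff_mul_le (.inl hL0) (.inr hg), mul_comm]
    exact (hL Q hQ).le.trans (setLIntegral_le_lintegral _ _)
  obtain ⟨u, huA, hdisj, hcov⟩ := exists_pairwiseDisjoint_sUnion_subset_biUnion_enlargement hτ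
    hne (ENNReal.div_ne_top hg hL0) hbdd
  have hmeas_u : ∀ Q ∈ u, MeasurableSet Q := fun Q hQ => hmeas Q (huA hQ)
  have hu : u.Countable := countable_of_pairwiseDisjoint_of_setLIntegral_ne_zero hmeas_u hdisj hg
    fun Q hQ => (hL Q (huA hQ)).ne_bot
  calc L * μ (⋃₀ A) ≤ L * ∑' Q : u, μ (enlargement μ A τ Q) := by
        gcongr
        exact (measure_mono hcov).trans (measure_biUnion_le μ hu _)
    _ ≤ L * ∑' Q : u, c * μ Q := by
        gcongr with Q
        exact hc Q (huA Q.2)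
    _ = c * ∑' Q : u, L * μ Q := by
        simp only [ENNReal.tsum_mul_left, mul_left_comm]
    _ ≤ c * ∑' Q : u, ∫⁻ y in Q, g y ∂μ := by
        gcongr with Q
        exact (hL Q (huA Q.2)).le
    _ ≤ c * ∫⁻ y, g y ∂μ := by
        gcongr
        exact tsum_setLIntegral_le_lintegral hmeas_u hdisj g

lemma setOf_lt_maximalFn_eq_sUnion (μ : Measure M) (A : Set (Set M)) (f : M → ℝ) (L : ℝ≥0∞) :
    {x | L < maximalFn μ A f x} =
      ⋃₀ {Q ∈ A | L < (∫⁻ y in Q, ENNReal.ofReal |f y| ∂μ) / μ Q} := by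
  ext x
  simp only [maximalFn, lt_iSup_iff, mem_ofPred_eq, mem_sUnion, exists_prop, and_assoc,
    and_comm (a := x ∈ _)]

lemma mul_measure_lt_maximalFn_le (hτ : 1 < τ) (hmeas : ∀ Q ∈ A, MeasurableSet Q)
    {c : ℝ≥0∞} (hc : ∀ Q ∈ A, μ (enlargement μ A τ Q) ≤ c * μ Q)
    {f : M → ℝ} (hf : ∫⁻ x, ENNReal.ofReal |f x| ∂μ ≠ ⊤) (L : ℝ≥0∞) :
    L * μ {x | L < maximalFn μ A f x} ≤ c * ∫⁻ x, ENNReal.ofReal |f x| ∂μ := by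
  rw [setOf_lt_maximalFn_eq_sUnion]
  exact mul_measure_sUnion_le_mul_lintegral hτ (fun Q hQ => hmeas Q hQ.1)
    (fun Q hQ => (measure_mono (enlargement_mono (sep_subset _ _) Q)).trans (hc Q hQ.1))
    hf fun Q hQ => ENNReal.mul_lt_of_lt_div hQ.2

theorem maximalFn_weak_type_one_one_general (hτ : 1 < τ) (hmeas : ∀ Q ∈ A, MeasurableSet Q)
    {C : ℝ} (hC : ∀ Q ∈ A, μ (enlargement μ A τ Q) ≤ ENNReal.ofReal C * μ Q)
    {f : M → ℝ} (hf : Integrable f μ) {lam : ℝ} (hlam : 0 < lam) :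
    μ {x | ENNReal.ofReal lam < maximalFn μ A f x} ≤
      ENNReal.ofReal (C * (∫ x, |f x| ∂μ) / lam) := by
  have hnorm : ∫⁻ x, ENNReal.ofReal |f x| ∂μ = ENNReal.ofReal (∫ x, |f x| ∂μ) :=
    (ofReal_integral_eq_lintegral_ofReal hf.abs (.of_forall fun _ => abs_nonneg _)).symm
  rw [ENNReal.ofReal_div_of_pos hlam, ENNReal.ofReal_mul' (integral_nonneg fun _ => abs_nonneg _),
    ← hnorm, ENNReal.le_div_iff_mul_le (.inl (ENNReal.ofReal_pos.2 hlam).ne')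
      (.inl ENNReal.ofReal_ne_top), mul_comm]
  exact mul_measure_lt_maximalFn_le hτ hmeas hC (hnorm ▸ ENNReal.ofReal_ne_top) _

end WeakType

/-- The maximal operator associated with a doubling family is of weak type `(1,1)`. -/
theorem maximalFn_weak_type_one_one
    {M : Type*} [MetricSpace M] [TopologicalSpace.SeparableSpace M]
    [MeasurableSpace M] [BorelSpace M] (μ : Measure M)
    (hballs : ∀ (x : M) (r : ℝ), μ (Metric.ball x r) < ⊤)
    (A : Set (Set M)) (C : ℝ) (hC : 0 < C) (hA : DoublingFamily μ A C) :
    ∃ Cw : ℝ, 0 < Cw ∧ ∀ f : M → ℝ, Integrable f μ → ∀ lam : ℝ, 0 < lam →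
      μ {x | ENNReal.ofReal lam < maximalFn μ A f x} ≤
        ENNReal.ofReal (Cw * (∫ x, |f x| ∂μ) / lam) := by
  exact ⟨C, hC, fun f hf lam hlam => maximalFn_weak_type_one_one_general one_lt_two hA.1
    (fun Q hQ => hA.measure_enlargement_two_le hQ) hf hlam⟩

end
end

section
/- Let X and Y be complete separable metric spaces with Y compact, and let R ⊆ X × Y be a compact subset such that for each y ∈ Y the fiber R_y = {x : (x, y) ∈ R} is nonempty. Then there exists a Borel measurable map χ : Y → X such that (χ(y), y) ∈ R for all y ∈ Y. -/
open TopologicalSpace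

/-!
By the Hausdorff–Alexandroff theorem a compact metrizable space is a continuous image of the
Cantor set, which is a compact subset of the line. Every fiber of a continuous surjection `p` from
the Cantor set onto a Hausdorff space therefore has a least point. The map `s` sending `y` to the
least point of its fiber is Borel, since `{y | s y ≤ a}` is the image under `p` of the points
`≤ a`, hence compact. For the selector, take `p` to be a parametrization of `R` by the Cantor set
followed by the projection to `Y`, and read off the `X`-coordinate.
-/

open Function Set

section LeastSection

variable {K Y α : Type*} {p : K → Y} {f : K → α} {s : Y → K}

theorem preimage_Iic_comp_rightInverse [Preorder α] (hs : RightInverse s p)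
    (hmin : ∀ k, f (s (p k)) ≤ f k) (a : α) : f ∘ s ⁻¹' Iic a = p '' (f ⁻¹' Iic a) := by
  ext y
  constructor
  · exact fun hy ↦ ⟨s y, hy, hs y⟩
  · rintro ⟨k, hk, rfl⟩
    exact (hmin k).trans hk

variable [TopologicalSpace K] [CompactSpace K] [TopologicalSpace Y]

theorem exists_rightInverse_forall_le [T1Space Y] [LinearOrder α] (hp : Continuous p)
    (hsurj : Surjective p) (hf : LowerSemicontinuous f) :
    ∃ s : Y → K, RightInverse s p ∧ ∀ k, f (s (p k)) ≤ f k := by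
  have exists_min (y : Y) : ∃ k ∈ p ⁻¹' {y}, IsMinOn f (p ⁻¹' {y}) k :=
    (hf.lowerSemicontinuousOn _).exists_isMinOn (hsurj y)
      (isClosed_singleton.preimage hp).isCompact
  choose s hs hmin using exists_min
  exact ⟨s, hs, fun k ↦ hmin (p k) rfl⟩

variable [T2Space Y] [MeasurableSpace Y] [OpensMeasurableSpace Y]
  [LinearOrder α] [TopologicalSpace α] [OrderTopology α] [SecondCountableTopology α]
  [MeasurableSpace α] [BorelSpace α]

theorem measurable_comp_rightInverse_of_forall_le (hp : Continuous p)
    (hf : LowerSemicontinuous f) (hs : RightInverse s p) (hmin : ∀ k, f (s (p k)) ≤ f k) :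
    Measurable (f ∘ s) := by
  refine measurable_of_Iic fun a ↦ ?_
  rw [preimage_Iic_comp_rightInverse hs hmin]
  exact (hp.isClosedMap _ (hf.isClosed_preimage a)).measurableSet

theorem exists_measurable_rightInverse_of_continuous_injective [MeasurableSpace K] [BorelSpace K]
    (hp : Continuous p) (hsurj : Surjective p) (hf : Continuous f) (hinj : Injective f) :
    ∃ s : Y → K, Measurable s ∧ RightInverse s p := by
  obtain ⟨s, hs, hmin⟩ := exists_rightInverse_forall_le hp hsurj hf.lowerSemicontinuous
  have hfs : Measurable (f ∘ s) :=
    measurable_comp_rightInverse_of_forall_le hp hf.lowerSemicontinuous hs hmin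
  have hemb : MeasurableEmbedding f := (hf.isClosedEmbedding hinj).measurableEmbedding
  exact ⟨s, hemb.measurable_comp_iff.mp hfs, hs⟩

end LeastSection

theorem exists_continuous_injective_nat_bool_real :
    ∃ f : (ℕ → Bool) → ℝ, Continuous f ∧ Injective f :=
  ⟨fun b ↦ cantorSetHomeomorphNatToBool.symm b,
    continuous_subtype_val.comp cantorSetHomeomorphNatToBool.symm.continuous,
    Subtype.val_injective.comp cantorSetHomeomorphNatToBool.symm.injective⟩

theorem exists_measurable_rightInverse_of_compactSpace {K Y : Type*}
    [TopologicalSpace K] [CompactSpace K] [MetrizableSpace K] [MeasurableSpace K] [BorelSpace K]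
    [TopologicalSpace Y] [T2Space Y] [MeasurableSpace Y] [OpensMeasurableSpace Y]
    {p : K → Y} (hp : Continuous p) (hsurj : Surjective p) :
    ∃ s : Y → K, Measurable s ∧ RightInverse s p := by
  rcases isEmpty_or_nonempty K with hK | hK
  · have : IsEmpty Y := hsurj.isEmpty
    exact ⟨isEmptyElim, measurable_of_empty _, isEmptyElim⟩
  let : MetricSpace K := metrizableSpaceMetric K
  obtain ⟨g, hg, hgsurj⟩ := exists_nat_bool_continuous_surjective_of_compact K
  obtain ⟨f, hf, hinj⟩ := exists_continuous_injective_nat_bool_real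
  obtain ⟨s, hs, hps⟩ := exists_measurable_rightInverse_of_continuous_injective
    (hp.comp hg) (hsurj.comp hgsurj) hf hinj
  exact ⟨g ∘ s, hg.measurable.comp hs, hps⟩

theorem measurable_selector_of_compact_general {X Y : Type*}
    [TopologicalSpace X] [MeasurableSpace X] [BorelSpace X]
    [TopologicalSpace Y] [T2Space Y] [MeasurableSpace Y] [OpensMeasurableSpace Y]
    (R : Set (X × Y)) [MetrizableSpace R] (hR : IsCompact R)
    (hfib : ∀ y : Y, ∃ x : X, (x, y) ∈ R) :
    ∃ χ : Y → X, Measurable χ ∧ ∀ y : Y, (χ y, y) ∈ R := by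
  -- Without second countability the product σ-algebra on `X × Y` need not be Borel.
  let : MeasurableSpace R := borel R
  have : BorelSpace R := ⟨rfl⟩
  have : CompactSpace R := isCompact_iff_compactSpace.mp hR
  have hfst : Continuous fun r : R ↦ r.1.1 := by fun_prop
  have hsnd : Continuous fun r : R ↦ r.1.2 := by fun_prop
  have hsurj : Surjective fun r : R ↦ r.1.2 := fun y ↦
    let ⟨x, hx⟩ := hfib y
    ⟨⟨(x, y), hx⟩, rfl⟩
  obtain ⟨s, hs, hsec⟩ := exists_measurable_rightInverse_of_compactSpace hsnd hsurj
  refine ⟨fun y ↦ (s y).1.1, hfst.measurable.comp hs, fun y ↦ ?_⟩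
  have hval : ((s y).1.1, y) = (s y).1 := Prod.ext rfl (hsec y).symm
  exact hval ▸ (s y).2

/-- Measurable selector: if `R ⊆ X × Y` is compact with `Y` compact and every fiber
`R_y = {x | (x, y) ∈ R}` nonempty, then there is a Borel measurable `χ : Y → X` with
`(χ y, y) ∈ R` for all `y`. -/
theorem measurable_selector_of_compact
    {X Y : Type*} [MetricSpace X] [CompleteSpace X] [SeparableSpace X]
    [MeasurableSpace X] [BorelSpace X]
    [MetricSpace Y] [CompleteSpace Y] [SeparableSpace Y] [CompactSpace Y]
    [MeasurableSpace Y] [BorelSpace Y]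
    (R : Set (X × Y)) (hR : IsCompact R)
    (hfib : ∀ y : Y, ∃ x : X, (x, y) ∈ R) :
    ∃ χ : Y → X, Measurable χ ∧ ∀ y : Y, (χ y, y) ∈ R :=
  measurable_selector_of_compact_general R hR hfib
end

section
/- Let G be a second countable locally compact group equipped with a right-invariant metric d inducing the topology of G and whose closed balls are compact, let N be a closed normal subgroup of G, let W be a closed subgroup of G with G = WN, let π : G → G/N be the quotient homomorphism, and equip W₀ = G/N with the quotient metric d_{W₀}(x,y) = inf{ d(v,z) : v, z ∈ W, π(v) = x, π(z) = y }. Then there exists a Borel measurable map χ : W₀ → W such that for all x ∈ W₀, π(χ(x)) = x and d(χ(x), e) = d_{W₀}(x, π(e)), where e is the identity of G. -/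
/-!
The fibres of `π` over `W` are closed and depend measurably on the base point: the base points whose
fibre meets a closed set `K` form `π (W ∩ K)`, which is σ-compact. Replacing closed sets by their
points nearest to a fixed point preserves this measurability, since a set's nearest points meet `K`
exactly when passing to the trace on `K` does not increase the distance. Take the points of each
fibre nearest to `1`, and then successively those nearest to each point of a dense sequence: these
compact sets shrink to a single point, because a point is determined by its distances to a dense
sequence. Finally, right invariance moves the second argument of `d(v, z)` to `1`, so that the
quotient distance to `π 1` is the distance from `1` to the fibre.
-/

open MeasureTheory Metric Set

noncomputable section

/-- The quotient metric on `G ⧸ N` obtained from `W`: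
`d_{W₀}(x, y) = inf { d(v, z) : v, z ∈ W, π v = x, π z = y }`. -/
def quotDist {G : Type*} [MetricSpace G] [Group G] (W N : Subgroup G) [N.Normal]
    (x y : G ⧸ N) : ℝ :=
  sInf {t : ℝ | ∃ v ∈ W, ∃ z ∈ W, (QuotientGroup.mk v : G ⧸ N) = x ∧
    (QuotientGroup.mk z : G ⧸ N) = y ∧ t = dist v z}

section HitMeasurable

variable {X α Y : Type*} [MeasurableSpace X]

/-- Measurability of a set-valued map, in the sense used for measurable selections of closed-valued
maps: the points whose value hits a given closed set form a measurable set. -/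
def HitMeasurable [TopologicalSpace α] (F : X → Set α) : Prop :=
  ∀ K, IsClosed K → MeasurableSet {x | (F x ∩ K).Nonempty}

namespace HitMeasurable

theorem inter_isClosed [TopologicalSpace α] {F : X → Set α} (hF : HitMeasurable F) {K : Set α}
    (hK : IsClosed K) : HitMeasurable fun x ↦ F x ∩ K := by
  intro L hL
  simpa only [inter_assoc] using hF (K ∩ L) (hK.inter hL)

theorem iInter_of_antitone [TopologicalSpace α] [T2Space α] {F : ℕ → X → Set α}
    (hF : ∀ n, HitMeasurable (F n)) (hanti : ∀ x, Antitone (F · x))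
    (hcompact : ∀ n x, IsCompact (F n x)) : HitMeasurable fun x ↦ ⋂ n, F n x := by
  intro K hK
  have hits_iff (x : X) : ((⋂ n, F n x) ∩ K).Nonempty ↔ ∀ n, (F n x ∩ K).Nonempty := by
    rw [iInter_inter]
    refine ⟨fun h n ↦ h.mono (iInter_subset _ n), fun h ↦ ?_⟩
    exact IsCompact.nonempty_iInter_of_sequence_nonempty_isCompact_isClosed _
      (fun n ↦ inter_subset_inter_left K (hanti x n.le_succ)) h ((hcompact 0 x).inter_right hK)
      (fun n ↦ (hcompact n x).isClosed.inter hK)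
  simpa only [hits_iff, ofPred_forall] using
    MeasurableSet.iInter fun n ↦ hF n K hK

theorem measurable [TopologicalSpace α] [MeasurableSpace α] [BorelSpace α] {f : X → α}
    (hf : HitMeasurable fun x ↦ {f x}) : Measurable f :=
  measurable_of_isClosed fun K hK ↦ by
    simpa only [singleton_inter_nonempty, preimage] using hf K hK

theorem measurableSet_of_isOpen [PseudoEMetricSpace α] {F : X → Set α} (hF : HitMeasurable F)
    {U : Set α} (hU : IsOpen U) : MeasurableSet {x | (F x ∩ U).Nonempty} := by
  obtain ⟨K, hK, -, rfl, -⟩ := hU.exists_iUnion_isClosed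
  simpa only [inter_iUnion, nonempty_iUnion, ofPred_exists] using
    MeasurableSet.iUnion fun n ↦ hF (K n) (hK n)

theorem measurable_infEDist [PseudoEMetricSpace α] {F : X → Set α} (hF : HitMeasurable F)
    (p : α) : Measurable fun x ↦ infEDist p (F x) := by
  refine measurable_of_Iio fun r ↦ ?_
  convert hF.measurableSet_of_isOpen (isOpen_eball (x := p) (ε := r)) using 1
  ext x
  simp only [mem_preimage, mem_Iio, infEDist_lt_iff, mem_ofPred_eq, Set.Nonempty, mem_inter_iff,
    mem_eball']

theorem measurable_infDist [PseudoMetricSpace α] {F : X → Set α} (hF : HitMeasurable F)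
    (p : α) : Measurable fun x ↦ infDist p (F x) :=
  (hF.measurable_infEDist p).ennreal_toReal

end HitMeasurable

theorem hitMeasurable_preimage_singleton [TopologicalSpace α] [SigmaCompactSpace α]
    [TopologicalSpace Y] [T2Space Y] [MeasurableSpace Y] [OpensMeasurableSpace Y] {f : α → Y}
    (hf : Continuous f) : HitMeasurable fun y ↦ f ⁻¹' {y} := by
  intro K hK
  obtain ⟨C, hC, hCK⟩ := (isSigmaCompact_univ.of_isClosed_subset hK (subset_univ K)).image hf
  have hits_eq_image : {y | (f ⁻¹' {y} ∩ K).Nonempty} = f '' K := by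
    ext y
    simp only [mem_ofPred_eq, Set.Nonempty, mem_inter_iff, mem_preimage, mem_singleton_iff,
      mem_image, and_comm]
  rw [hits_eq_image, ← hCK]
  exact MeasurableSet.iUnion fun n ↦ (hC n).measurableSet

end HitMeasurable

section NearestPoints

variable {X α : Type*} [PseudoMetricSpace α] {A : Set α}

/-- The metric projection of `p` to `A`: the points of `A` realising the distance from `p` to `A`.
It is written as a trace on a closed ball so that closedness and compactness are immediate. -/
def nearestPoints (A : Set α) (p : α) : Set α :=
  A ∩ closedBall p (infDist p A)

theorem dist_eq_infDist_of_mem_nearestPoints {p w : α} (hw : w ∈ nearestPoints A p) :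
    dist w p = infDist p A :=
  le_antisymm hw.2 (dist_comm p w ▸ infDist_le_dist_of_mem hw.1)

theorem isClosed_nearestPoints (hA : IsClosed A) (p : α) : IsClosed (nearestPoints A p) :=
  hA.inter isClosed_closedBall

variable [ProperSpace α]

theorem isCompact_nearestPoints (hA : IsClosed A) (p : α) : IsCompact (nearestPoints A p) :=
  (isCompact_closedBall p _).inter_left hA

theorem nearestPoints_inter_nonempty_iff {K : Set α} (hA : IsClosed A) (hK : IsClosed K) (p : α) :
    (nearestPoints A p ∩ K).Nonempty ↔
      (A ∩ K).Nonempty ∧ infDist p (A ∩ K) ≤ infDist p A := by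
  constructor
  · rintro ⟨w, hw, hwK⟩
    refine ⟨⟨w, hw.1, hwK⟩, ?_⟩
    rw [← dist_eq_infDist_of_mem_nearestPoints hw, dist_comm]
    exact infDist_le_dist_of_mem ⟨hw.1, hwK⟩
  · rintro ⟨hne, hle⟩
    obtain ⟨w, ⟨hwA, hwK⟩, hw⟩ := (hA.inter hK).exists_infDist_eq_dist hne p
    exact ⟨w, ⟨hwA, mem_closedBall'.2 (hw ▸ hle)⟩, hwK⟩

theorem nearestPoints_nonempty (hA : IsClosed A) (hne : A.Nonempty) (p : α) :
    (nearestPoints A p).Nonempty := by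
  have hits_univ := (nearestPoints_inter_nonempty_iff hA isClosed_univ p).2
  simp only [inter_univ] at hits_univ
  exact hits_univ ⟨hne, le_rfl⟩

theorem HitMeasurable.nearestPoints [MeasurableSpace X] {F : X → Set α} (hF : HitMeasurable F)
    (hclosed : ∀ x, IsClosed (F x)) (p : α) : HitMeasurable fun x ↦ nearestPoints (F x) p := by
  intro K hK
  simp only [nearestPoints_inter_nonempty_iff (hclosed _) hK, ofPred_and]
  exact (hF K hK).inter <| measurableSet_le ((hF.inter_isClosed hK).measurable_infDist p)
    (hF.measurable_infDist p)

end NearestPoints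

section IteratedNearestPoints

/-- The points of `A` that successively minimise the distances to `p 0`, …, `p (n - 1)`: the
lexicographic minimisation that singles out one point of `A` when `p` is dense. -/
def iteratedNearestPoints {α : Type*} [PseudoMetricSpace α] (p : ℕ → α) (A : Set α) : ℕ → Set α
  | 0 => A
  | n + 1 => nearestPoints (iteratedNearestPoints p A n) (p n)

variable {X α : Type*}

section PseudoMetricSpace

variable [PseudoMetricSpace α] {p : ℕ → α} {A : Set α}

theorem iteratedNearestPoints_antitone (p : ℕ → α) (A : Set α) :
    Antitone (iteratedNearestPoints p A) :=
  antitone_nat_of_succ_le fun _ ↦ inter_subset_left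

theorem isClosed_iteratedNearestPoints (hA : IsClosed A) (n : ℕ) :
    IsClosed (iteratedNearestPoints p A n) := by
  induction n with
  | zero => exact hA
  | succ n ih => exact isClosed_nearestPoints ih (p n)

variable [ProperSpace α]

theorem isCompact_iteratedNearestPoints_succ (hA : IsClosed A) (n : ℕ) :
    IsCompact (iteratedNearestPoints p A (n + 1)) :=
  isCompact_nearestPoints (isClosed_iteratedNearestPoints hA n) (p n)

theorem iteratedNearestPoints_nonempty (hA : IsClosed A) (hne : A.Nonempty) (n : ℕ) :
    (iteratedNearestPoints p A n).Nonempty := by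
  induction n with
  | zero => exact hne
  | succ n ih => exact nearestPoints_nonempty (isClosed_iteratedNearestPoints hA n) ih (p n)

theorem HitMeasurable.iteratedNearestPoints [MeasurableSpace X] {F : X → Set α}
    (hF : HitMeasurable F) (hclosed : ∀ x, IsClosed (F x)) (n : ℕ) :
    HitMeasurable fun x ↦ iteratedNearestPoints p (F x) n := by
  induction n with
  | zero => exact hF
  | succ n ih =>
    exact ih.nearestPoints (fun x ↦ isClosed_iteratedNearestPoints (hclosed x) n) (p n)

end PseudoMetricSpace

variable [MetricSpace α]

theorem eq_of_forall_dist_eq {ι : Type*} {p : ι → α} (hp : DenseRange p) {v w : α}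
    (h : ∀ i, dist v (p i) = dist w (p i)) : v = w := by
  have dist_eq : dist v = dist w :=
    hp.equalizer (by fun_prop) (by fun_prop) (funext h)
  simpa only [dist_self, dist_eq_zero] using congrFun dist_eq w

variable [ProperSpace α] {p : ℕ → α}

theorem exists_iInter_iteratedNearestPoints_eq_singleton (hp : DenseRange p) {A : Set α}
    (hA : IsClosed A) (hne : A.Nonempty) :
    ∃ w ∈ A, ⋂ n, iteratedNearestPoints p A (n + 1) = {w} := by
  obtain ⟨w, hw⟩ : (⋂ n, iteratedNearestPoints p A (n + 1)).Nonempty :=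
    IsCompact.nonempty_iInter_of_sequence_nonempty_isCompact_isClosed _
      (fun n ↦ iteratedNearestPoints_antitone p A (n + 1).le_succ)
      (fun n ↦ iteratedNearestPoints_nonempty hA hne (n + 1))
      (isCompact_iteratedNearestPoints_succ hA 0)
      (fun n ↦ isClosed_iteratedNearestPoints hA (n + 1))
  refine ⟨w, iteratedNearestPoints_antitone p A zero_le_one (mem_iInter.1 hw 0),
    eq_singleton_iff_unique_mem.2 ⟨hw, fun v hv ↦ eq_of_forall_dist_eq hp fun n ↦ ?_⟩⟩
  rw [dist_eq_infDist_of_mem_nearestPoints (mem_iInter.1 hv n),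
    dist_eq_infDist_of_mem_nearestPoints (mem_iInter.1 hw n)]

variable [MeasurableSpace α] [BorelSpace α]

theorem HitMeasurable.exists_measurable_selection [MeasurableSpace X] {F : X → Set α}
    (hF : HitMeasurable F) (hclosed : ∀ x, IsClosed (F x)) (hne : ∀ x, (F x).Nonempty) :
    ∃ χ : X → α, Measurable χ ∧ ∀ x, χ x ∈ F x := by
  rcases isEmpty_or_nonempty X with _ | ⟨⟨x₀⟩⟩
  · exact ⟨isEmptyElim, measurable_of_empty _, isEmptyElim⟩
  have : Nonempty α := (hne x₀).to_type
  obtain ⟨p, hp⟩ := TopologicalSpace.exists_dense_seq α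
  choose χ hχF hχ using fun x ↦
    exists_iInter_iteratedNearestPoints_eq_singleton hp (hclosed x) (hne x)
  refine ⟨χ, HitMeasurable.measurable ?_, hχF⟩
  simp only [← hχ]
  exact HitMeasurable.iInter_of_antitone (fun n ↦ hF.iteratedNearestPoints hclosed (n + 1))
    (fun x m n hmn ↦ iteratedNearestPoints_antitone p (F x) (Nat.succ_le_succ hmn))
    (fun n x ↦ isCompact_iteratedNearestPoints_succ (hclosed x) n)

theorem HitMeasurable.exists_measurable_selection_dist_eq_infDist [MeasurableSpace X]
    {F : X → Set α} (hF : HitMeasurable F) (hclosed : ∀ x, IsClosed (F x))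
    (hne : ∀ x, (F x).Nonempty) (p : α) :
    ∃ χ : X → α, Measurable χ ∧ ∀ x, χ x ∈ F x ∧ dist (χ x) p = infDist p (F x) := by
  obtain ⟨χ, hχ, hmem⟩ := (hF.nearestPoints hclosed p).exists_measurable_selection
    (fun x ↦ isClosed_nearestPoints (hclosed x) p)
    (fun x ↦ nearestPoints_nonempty (hclosed x) (hne x) p)
  exact ⟨χ, hχ, fun x ↦ ⟨(hmem x).1, dist_eq_infDist_of_mem_nearestPoints (hmem x)⟩⟩

end IteratedNearestPoints

section QuotientGroup

variable {G : Type*} [Group G] {N W : Subgroup G}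

theorem preimage_mk_inter_nonempty (hWN : ∀ g : G, ∃ w ∈ W, ∃ n ∈ N, g = w * n) (x : G ⧸ N) :
    ((QuotientGroup.mk ⁻¹' {x} : Set G) ∩ W).Nonempty := by
  obtain ⟨g, rfl⟩ := QuotientGroup.mk_surjective x
  obtain ⟨w, hw, n, hn, rfl⟩ := hWN g
  exact ⟨w, (QuotientGroup.mk_mul_of_mem w hn).symm, hw⟩

theorem quotDist_one_eq_infDist [MetricSpace G]
    (hright : ∀ x y g : G, dist (x * g) (y * g) = dist x y) [N.Normal] (x : G ⧸ N) :
    quotDist W N x ((1 : G) : G ⧸ N) = infDist 1 ((QuotientGroup.mk ⁻¹' {x} : Set G) ∩ W) := by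
  rw [infDist_eq_iInf, ← sInf_image', quotDist]
  congr 1
  ext t
  constructor
  · rintro ⟨v, hv, z, hz, hvx, hz1, rfl⟩
    refine ⟨v * z⁻¹, ⟨?_, W.mul_mem hv (W.inv_mem hz)⟩, ?_⟩
    · simp only [mem_preimage, mem_singleton_iff, QuotientGroup.mk_mul, QuotientGroup.mk_inv, hvx,
        hz1, QuotientGroup.mk_one, inv_one, mul_one]
    · rw [dist_comm, ← hright _ _ z, inv_mul_cancel_right, one_mul]
  · rintro ⟨w, ⟨hwx, hw⟩, rfl⟩
    exact ⟨w, hw, 1, W.one_mem, hwx, rfl, dist_comm 1 w⟩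

end QuotientGroup

/-- There is a Borel measurable section `χ : G ⧸ N → W ⊆ G` of the quotient map which is
distance minimizing: `d(χ x, e) = d_{W₀}(x, π e)`. -/
theorem exists_measurable_minimizing_section
    {G : Type*} [MetricSpace G] [Group G] [IsTopologicalGroup G]
    [SecondCountableTopology G] [ProperSpace G]
    [MeasurableSpace G] [BorelSpace G]
    (hright : ∀ x y g : G, dist (x * g) (y * g) = dist x y)
    (N : Subgroup G) [N.Normal] (hNclosed : IsClosed (N : Set G))
    (W : Subgroup G) (hWclosed : IsClosed (W : Set G))
    (hWN : ∀ g : G, ∃ w ∈ W, ∃ n ∈ N, g = w * n)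
    [MeasurableSpace (G ⧸ N)] [BorelSpace (G ⧸ N)] :
    ∃ χ : G ⧸ N → G, Measurable χ ∧ ∀ x : G ⧸ N,
      χ x ∈ W ∧ (QuotientGroup.mk (χ x) : G ⧸ N) = x ∧
      dist (χ x) (1 : G) = quotDist W N x ((1 : G) : G ⧸ N) := by
  have : IsClosed (N : Set G) := hNclosed
  have continuous_mk : Continuous ((↑) : G → G ⧸ N) := QuotientGroup.continuous_mk
  obtain ⟨χ, hχ, hmin⟩ :=
    ((hitMeasurable_preimage_singleton continuous_mk).inter_isClosed
      hWclosed).exists_measurable_selection_dist_eq_infDist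
      (fun x ↦ (isClosed_singleton.preimage continuous_mk).inter hWclosed)
      (preimage_mk_inter_nonempty hWN) 1
  refine ⟨χ, hχ, fun x ↦ ?_⟩
  obtain ⟨⟨hχx, hχW⟩, hdist⟩ := hmin x
  exact ⟨hχW, hχx, hdist.trans (quotDist_one_eq_infDist hright x).symm⟩

end
end

section
/- Let V be a finite-dimensional real vector space and let ‖·‖_d and ‖·‖_ρ be two norms on V induced by inner products. If there exists m ≥ 2 such that m‖x‖_ρ ≤ ‖x‖_d ≤ m²‖x‖_ρ for all x ∈ V, then there exists a finite sequence of inner-product norms n₀, n₁, …, n_k on V with n₀ = ‖·‖_d, n_k = ‖·‖_ρ, and 2 n_{i+1}(x) ≤ n_i(x) ≤ 16 n_{i+1}(x) for all x ∈ V and all i = 0, …, k−1. -/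
noncomputable section

/-- `n` is a norm on `V` induced by an inner product, i.e. `n x = √(Q x)` for a positive
definite quadratic form `Q`. -/
def IsInnerProductNorm {V : Type*} [AddCommGroup V] [Module ℝ V] (n : V → ℝ) : Prop :=
  ∃ Q : QuadraticForm ℝ V, Q.PosDef ∧ ∀ x : V, n x = Real.sqrt (Q x)

/-!
Let `D` and `R` be the quadratic forms of the two norms and write `m = t ^ k` with `c ≤ t ≤ c ^ 2`,
where `c = 2`, so that `D / R` takes values in `[u ^ k, v ^ k]` for `u = t ^ 2` and `v = t ^ 4`.
Both `D` and `R` are nonnegative combinations of the positive semidefinite forms `v ^ k • R - D` and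
`D - u ^ k • R`, with weights proportional to `(u ^ k, v ^ k)` and to `(1, 1)`. Passing from the
first pair of weights to the second through the pairs `(u ^ j, v ^ j)` divides the form by a factor
between `u` and `v` at each step, hence the norm by a factor between `t ≥ c` and `t ^ 2 ≤ c ^ 4`.
-/

section ChordForm

variable {K V : Type*} [Field K] [AddCommGroup V] [Module K V]

/-- The quadratic form in the pencil of `D` and `R` whose ratio to `R` is the affine function of
the ratio `D / R` with value `p` at `α` and `q` at `β`. It interpolates between `D` and `R`, and is
written in barycentric form so that it is visibly monotone in `p` and `q` where
`α ≤ D / R ≤ β`. -/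
def chordForm (D R : QuadraticForm K V) (α β p q : K) : QuadraticForm K V :=
  (β - α)⁻¹ • (p • (β • R - D) + q • (D - α • R))

theorem chordForm_apply (D R : QuadraticForm K V) (α β p q : K) (x : V) :
    chordForm D R α β p q x = (β - α)⁻¹ * (p * (β * R x - D x) + q * (D x - α * R x)) :=
  rfl

theorem mul_chordForm_apply (D R : QuadraticForm K V) (α β p q c : K) (x : V) :
    c * chordForm D R α β p q x = chordForm D R α β (c * p) (c * q) x := by
  simp only [chordForm_apply]
  ring

theorem chordForm_endpoints {α β : K} (h : α ≠ β) (D R : QuadraticForm K V) :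
    chordForm D R α β α β = D := by
  ext x
  have := sub_ne_zero.mpr h.symm
  rw [chordForm_apply]
  field_simp
  ring

theorem chordForm_self {α β : K} (h : α ≠ β) (D R : QuadraticForm K V) (p : K) :
    chordForm D R α β p p = p • R := by
  ext x
  have := sub_ne_zero.mpr h.symm
  rw [chordForm_apply, smul_apply, smul_eq_mul]
  field_simp
  ring

variable [LinearOrder K] [IsStrictOrderedRing K] {D R : QuadraticForm K V} {α β : K}

theorem chordForm_apply_mono (hαβ : α ≤ β) {x : V} (hα : α * R x ≤ D x) (hβ : D x ≤ β * R x)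
    {p p' q q' : K} (hp : p ≤ p') (hq : q ≤ q') :
    chordForm D R α β p q x ≤ chordForm D R α β p' q' x := by
  have := sub_nonneg.mpr hαβ
  have := sub_nonneg.mpr hα
  have := sub_nonneg.mpr hβ
  simp only [chordForm_apply]
  gcongr

theorem chordForm_posDef (hR : R.PosDef) (hαβ : α < β) (hα : ∀ x, α * R x ≤ D x)
    (hβ : ∀ x, D x ≤ β * R x) {p q : K} (hp : 0 < p) (hq : 0 < q) :
    (chordForm D R α β p q).PosDef := by
  intro x hx
  calc
    0 < (min p q • R) x := mul_pos (lt_min hp hq) (hR x hx)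
    _ = chordForm D R α β (min p q) (min p q) x := by rw [chordForm_self hαβ.ne]
    _ ≤ chordForm D R α β p q x :=
      chordForm_apply_mono hαβ.le (hα x) (hβ x) (min_le_left p q) (min_le_right p q)

theorem exists_posDef_chain {u v : K} (hu : 0 < u) (huv : u < v) {k : ℕ} (hk : k ≠ 0)
    (hR : R.PosDef) (hlow : ∀ x, u ^ k * R x ≤ D x) (hhigh : ∀ x, D x ≤ v ^ k * R x) :
    ∃ Q : ℕ → QuadraticForm K V, (∀ i, (Q i).PosDef) ∧ Q 0 = D ∧ Q k = R ∧
      ∀ i < k, ∀ x, u * Q (i + 1) x ≤ Q i x ∧ Q i x ≤ v * Q (i + 1) x := by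
  have hv : 0 < v := hu.trans huv
  have hpow : u ^ k < v ^ k := pow_lt_pow_left₀ huv hu.le hk
  refine ⟨fun i => chordForm D R (u ^ k) (v ^ k) (u ^ (k - i)) (v ^ (k - i)), fun i => ?_, ?_, ?_,
    fun i hi x => ?_⟩
  · exact chordForm_posDef hR hpow hlow hhigh (pow_pos hu _) (pow_pos hv _)
  · exact chordForm_endpoints hpow.ne D R
  · simp only [Nat.sub_self, pow_zero, chordForm_self hpow.ne, one_smul]
  · obtain ⟨j, rfl⟩ := Nat.exists_eq_add_of_lt hi
    have hj : i + j + 1 - i = j + 1 := by omega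
    have hj' : i + j + 1 - (i + 1) = j := by omega
    simp only [hj, hj', mul_chordForm_apply, pow_succ' _ j]
    constructor <;> apply chordForm_apply_mono hpow.le (hlow x) (hhigh x) <;> gcongr

end ChordForm

theorem exists_mem_Icc_pow_eq {c m : ℝ} (hc : 1 < c) (hm : c ≤ m) :
    ∃ k ≠ 0, ∃ t ∈ Set.Icc c (c ^ 2), t ^ k = m := by
  have hc0 : 0 ≤ c := zero_le_one.trans hc.le
  have hm0 : 0 ≤ m := hc0.trans hm
  obtain ⟨k, hkm, hmk⟩ := exists_nat_pow_near (hc.le.trans hm) hc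
  have hk : k ≠ 0 := by
    rintro rfl
    exact hmk.not_ge (by simpa only [zero_add, pow_one] using hm)
  have hroot : (m ^ (k⁻¹ : ℝ)) ^ k = m := Real.rpow_inv_natCast_pow hm0 hk
  refine ⟨k, hk, m ^ (k⁻¹ : ℝ), ⟨?_, ?_⟩, hroot⟩
  · rwa [← pow_le_pow_iff_left₀ hc0 (by positivity) hk, hroot]
  · rw [← pow_le_pow_iff_left₀ (by positivity) (by positivity) hk, hroot, ← pow_mul]
    exact hmk.le.trans (pow_le_pow_right₀ hc.le (by omega))

theorem mul_sqrt_le_sqrt_iff {c p q : ℝ} (hc : 0 ≤ c) (hp : 0 ≤ p) :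
    c * √q ≤ √p ↔ c ^ 2 * q ≤ p := by
  rw [← Real.sqrt_le_sqrt_iff hp, Real.sqrt_mul (sq_nonneg c), Real.sqrt_sq hc]

theorem sqrt_le_mul_sqrt_iff {c p q : ℝ} (hc : 0 ≤ c) (hq : 0 ≤ q) :
    √p ≤ c * √q ↔ p ≤ c ^ 2 * q := by
  rw [← Real.sqrt_le_sqrt_iff (y := c ^ 2 * q) (by positivity),
    Real.sqrt_mul (sq_nonneg c), Real.sqrt_sq hc]

theorem doubling_chain_of_inner_product_norms_general
    {V : Type*} [AddCommGroup V] [Module ℝ V]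
    {nd nρ : V → ℝ} (hd : IsInnerProductNorm nd) (hρ : IsInnerProductNorm nρ)
    {c m : ℝ} (hc : 1 < c) (hm : c ≤ m)
    (hlow : ∀ x : V, m * nρ x ≤ nd x) (hhigh : ∀ x : V, nd x ≤ m ^ 2 * nρ x) :
    ∃ (k : ℕ) (ns : ℕ → V → ℝ),
      (∀ i ≤ k, IsInnerProductNorm (ns i)) ∧
      ns 0 = nd ∧ ns k = nρ ∧
      ∀ i < k, ∀ x : V, c * ns (i + 1) x ≤ ns i x ∧ ns i x ≤ c ^ 4 * ns (i + 1) x := by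
  obtain ⟨D, hD, hnd⟩ := hd
  obtain ⟨R, hR, hnρ⟩ := hρ
  obtain ⟨k, hk, t, ⟨hct, htc⟩, rfl⟩ := exists_mem_Icc_pow_eq hc hm
  have hc0 : 0 < c := zero_lt_one.trans hc
  have ht : 1 < t := hc.trans_le hct
  have hDlow (x : V) : (t ^ 2) ^ k * R x ≤ D x := by
    rw [pow_right_comm, ← mul_sqrt_le_sqrt_iff (by positivity) (hD.nonneg x), ← hnd, ← hnρ]
    exact hlow x
  have hDhigh (x : V) : D x ≤ (t ^ 4) ^ k * R x := by
    rw [show (t ^ 4) ^ k = ((t ^ k) ^ 2) ^ 2 by ring,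
      ← sqrt_le_mul_sqrt_iff (by positivity) (hR.nonneg x), ← hnd, ← hnρ]
    exact hhigh x
  obtain ⟨Q, hQ, rfl, rfl, hstep⟩ := exists_posDef_chain (by positivity)
    (pow_lt_pow_right₀ ht (by norm_num)) hk hR hDlow hDhigh
  refine ⟨k, fun i x => √(Q i x), fun i _ => ⟨Q i, hQ i, fun _ => rfl⟩, (funext hnd).symm,
    (funext hnρ).symm, fun i hi x => ?_⟩
  have hQx (j : ℕ) : 0 ≤ Q j x := (hQ j).nonneg x
  have hcQ : c ^ 2 * Q (i + 1) x ≤ t ^ 2 * Q (i + 1) x := by have := hQx (i + 1); gcongr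
  have htQ : t ^ 4 * Q (i + 1) x ≤ (c ^ 2) ^ 4 * Q (i + 1) x := by have := hQx (i + 1); gcongr
  rw [mul_sqrt_le_sqrt_iff hc0.le (hQx i), sqrt_le_mul_sqrt_iff (by positivity) (hQx (i + 1)),
    show (c ^ 4) ^ 2 = (c ^ 2) ^ 4 by ring]
  exact ⟨hcQ.trans (hstep i hi x).1, (hstep i hi x).2.trans htQ⟩

/-- Between two comparable inner-product norms (with `m ‖x‖_ρ ≤ ‖x‖_d ≤ m² ‖x‖_ρ`,
`m ≥ 2`) there is a doubling chain of inner-product norms. -/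
theorem doubling_chain_of_inner_product_norms
    {V : Type*} [AddCommGroup V] [Module ℝ V] [FiniteDimensional ℝ V]
    (nd nρ : V → ℝ) (hd : IsInnerProductNorm nd) (hρ : IsInnerProductNorm nρ)
    (m : ℝ) (hm : 2 ≤ m)
    (hlow : ∀ x : V, m * nρ x ≤ nd x) (hhigh : ∀ x : V, nd x ≤ m ^ 2 * nρ x) :
    ∃ (k : ℕ) (ns : ℕ → V → ℝ),
      (∀ i ≤ k, IsInnerProductNorm (ns i)) ∧
      ns 0 = nd ∧ ns k = nρ ∧
      ∀ i < k, ∀ x : V, 2 * ns (i + 1) x ≤ ns i x ∧ ns i x ≤ 16 * ns (i + 1) x := by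
  rw [show (16 : ℝ) = 2 ^ 4 by norm_num]
  exact doubling_chain_of_inner_product_norms_general hd hρ one_lt_two hm hlow hhigh

end
end
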